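/- Let z_{1,1}, …, z_{1,N} ∈ ℝ^{q_1}, define I_1(w) = Σ_{i=1}^N w_i z_{1,i} z_{1,i}ᵀ and Φ_1(w) = −λ_min(I_1(w)). For k = 2, …, K, let z_{k,1}, …, z_{k,N} ∈ ℝ^{q_k}, I_k(w) = Σ_i w_i z_{k,i} z_{k,i}ᵀ, and Φ_k(w) = φ_k(I_k(w)) with φ_k convex on q_k×q_k matrices and differentiable at I_k(w*). Let w* ∈ Ω and η_2, …, η_K ≥ 0. Suppose the eigenspace of I_1(w*) associated with λ_min(I_1(w*)) is one-dimensional, spanned by a unit eigenvector v*. Then w* minimizes Φ_1 + Σ_{k=2}^K η_k Φ_k over Ω if and only if (v*ᵀ z_{1,i})² − λ_min(I_1(w*)) + Σ_{k=2}^K η_k d_k(i, w*) ≤ 0 for all i = 1, …, N, where d_k(i, w*) = trace(∇φ_k(I_k(w*))ᵀ (I_k(w*) − z_{k,i} z_{k,i}ᵀ)). -/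

import Mathlib

open Finset Matrix

noncomputable section

attribute [local instance] Matrix.normedAddCommGroup Matrix.normedSpace

/-- Dot product of two real vectors indexed by a finite type. -/
def dotp {α : Type*} [Fintype α] (g w : α → ℝ) : ℝ := ∑ i, g i * w i

/-- The probability simplex Ω in ℝ^N. -/
def simplex (N : ℕ) : Set (Fin N → ℝ) := {w | (∑ i, w i) = 1 ∧ ∀ i, 0 ≤ w i}

/-- The subdifferential of a convex function `Φ : ℝ^N → ℝ` at `w`. -/
def subdiff {N : ℕ} (Φ : (Fin N → ℝ) → ℝ) (w : Fin N → ℝ) : Set (Fin N → ℝ) :=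
  {g | ∀ w', dotp g (w' - w) ≤ Φ w' - Φ w}

/-- The i-th standard basis vector of ℝ^N. -/
def stdBasis {N : ℕ} (i : Fin N) : Fin N → ℝ := fun j => if j = i then 1 else 0

/-- The information matrix `I(w) = Σ_i w_i z_i z_iᵀ`. -/
def infoMat {N q : ℕ} (z : Fin N → Fin q → ℝ) (w : Fin N → ℝ) :
    Matrix (Fin q) (Fin q) ℝ := ∑ i, w i • Matrix.vecMulVec (z i) (z i)

/-- The smallest eigenvalue of a (symmetric) real matrix `M`. -/
def lambdaMin {q : ℕ} (M : Matrix (Fin q) (Fin q) ℝ) : ℝ :=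
  sInf {r : ℝ | ∃ v : Fin q → ℝ, v ≠ 0 ∧ M.mulVec v = r • v}

open Filter Topology

lemma eigset_finite {q : ℕ} (M : Matrix (Fin q) (Fin q) ℝ) :
    {r : ℝ | ∃ v : Fin q → ℝ, v ≠ 0 ∧ M.mulVec v = r • v}.Finite := by
  refine (Module.End.finite_hasEigenvalue (Matrix.toLin' M)).subset ?_
  rintro r ⟨v, hv, h⟩
  exact Module.End.hasEigenvalue_of_hasEigenvector (x := v)
    ⟨Module.End.mem_eigenspace_iff.mpr (by simpa using h), hv⟩

lemma eigbasis_ne {q : ℕ} {M : Matrix (Fin q) (Fin q) ℝ} (hM : M.IsHermitian) (j : Fin q) :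
    (⇑(hM.eigenvectorBasis j) : Fin q → ℝ) ≠ 0 := by
  intro h
  have h1 := hM.eigenvectorBasis.orthonormal.ne_zero j
  apply h1
  ext i
  exact congrFun h i

lemma lambdaMin_psd {q : ℕ} {M : Matrix (Fin q) (Fin q) ℝ} (hM : M.IsHermitian) :
    (M - lambdaMin M • (1 : Matrix (Fin q) (Fin q) ℝ)).PosSemidef := by
  have hH : (M - lambdaMin M • (1 : Matrix (Fin q) (Fin q) ℝ)).IsHermitian := by
    refine hM.sub ?_
    simp [Matrix.IsHermitian, Matrix.conjTranspose_smul]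
  rw [hH.posSemidef_iff_eigenvalues_nonneg]
  intro j
  have h := hH.mulVec_eigenvectorBasis j
  have h0 := eigbasis_ne hH j
  set x : Fin q → ℝ := ⇑(hH.eigenvectorBasis j)
  set μ := hH.eigenvalues j
  have : lambdaMin M ≤ μ + lambdaMin M := by
    refine csInf_le (eigset_finite M).bddBelow ⟨x, h0, ?_⟩
    rw [Matrix.sub_mulVec, Matrix.smul_mulVec, Matrix.one_mulVec, sub_eq_iff_eq_add] at h
    rw [h, add_smul]
  simpa using this

lemma lambdaMin_exists {q : ℕ} {M : Matrix (Fin q) (Fin q) ℝ} (hM : M.IsHermitian) (j : Fin q) :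
    ∃ v : Fin q → ℝ, v ⬝ᵥ v = 1 ∧ M.mulVec v = lambdaMin M • v := by
  have hne : {r : ℝ | ∃ v : Fin q → ℝ, v ≠ 0 ∧ M.mulVec v = r • v}.Nonempty :=
    ⟨_, _, eigbasis_ne hM j, hM.mulVec_eigenvectorBasis j⟩
  obtain ⟨v, hv, h⟩ := hne.csInf_mem (eigset_finite M)
  have hp : 0 < v ⬝ᵥ v := by
    have h1 : 0 ≤ v ⬝ᵥ v := Finset.sum_nonneg fun i _ => mul_self_nonneg _
    exact lt_of_le_of_ne h1 fun h => hv (dotProduct_self_eq_zero.mp h.symm)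
  refine ⟨(Real.sqrt (v ⬝ᵥ v))⁻¹ • v, ?_, ?_⟩
  · rw [smul_dotProduct, dotProduct_smul, smul_eq_mul, smul_eq_mul, ← mul_assoc, ← mul_inv,
      Real.mul_self_sqrt hp.le, inv_mul_cancel₀ hp.ne']
  · rw [Matrix.mulVec_smul, h, smul_comm]; rfl

lemma lambdaMin_le {q : ℕ} {M : Matrix (Fin q) (Fin q) ℝ} (hM : M.IsHermitian)
    {v : Fin q → ℝ} (hv : v ⬝ᵥ v = 1) : lambdaMin M ≤ v ⬝ᵥ M *ᵥ v := by
  have h := (posSemidef_iff_dotProduct_mulVec.mp (lambdaMin_psd hM)).2 v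
  rw [Matrix.sub_mulVec, Matrix.smul_mulVec, Matrix.one_mulVec, dotProduct_sub,
    dotProduct_smul] at h
  simp [hv] at h
  exact h

lemma lambdaMin_eig {q : ℕ} {M : Matrix (Fin q) (Fin q) ℝ} (hM : M.IsHermitian)
    {v : Fin q → ℝ} (hv : v ⬝ᵥ v = 1) (hle : v ⬝ᵥ M *ᵥ v ≤ lambdaMin M) :
    M *ᵥ v = lambdaMin M • v := by
  have he := le_antisymm hle (lambdaMin_le hM hv)
  have h := ((lambdaMin_psd hM).dotProduct_mulVec_zero_iff v).mp (by
    rw [Matrix.sub_mulVec, Matrix.smul_mulVec, Matrix.one_mulVec, dotProduct_sub,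
      dotProduct_smul]
    simp [hv, he])
  rw [Matrix.sub_mulVec, Matrix.smul_mulVec, Matrix.one_mulVec, sub_eq_zero] at h
  exact h

lemma infoMat_herm {N q : ℕ} (z : Fin N → Fin q → ℝ) (w : Fin N → ℝ) :
    (infoMat z w).IsHermitian := by
  ext a b
  simp [infoMat, Matrix.sum_apply, vecMulVec_apply, mul_comm]

lemma infoMat_add_smul {N q : ℕ} (z : Fin N → Fin q → ℝ) (w d : Fin N → ℝ) (t : ℝ) :
    infoMat z (w + t • d) = infoMat z w + t • infoMat z d := by
  simp [infoMat, add_smul, Finset.sum_add_distrib, Finset.smul_sum, mul_smul]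

lemma infoMat_sub {N q : ℕ} (z : Fin N → Fin q → ℝ) (w d : Fin N → ℝ) :
    infoMat z (w - d) = infoMat z w - infoMat z d := by
  simp [infoMat, sub_smul, Finset.sum_sub_distrib]

lemma infoMat_std {N q : ℕ} (z : Fin N → Fin q → ℝ) (i : Fin N) :
    infoMat z (stdBasis i) = vecMulVec (z i) (z i) := by
  simp [infoMat, _root_.stdBasis, ite_smul]

lemma infoMat_quad {N q : ℕ} (z : Fin N → Fin q → ℝ) (w : Fin N → ℝ) (v : Fin q → ℝ) :
    v ⬝ᵥ infoMat z w *ᵥ v = ∑ i, w i * (dotp v (z i)) ^ 2 := by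
  have hd : ∀ i, dotp v (z i) = v ⬝ᵥ z i := fun i => rfl
  simp only [infoMat, Matrix.sum_mulVec, dotProduct_sum, Matrix.smul_mulVec, dotProduct_smul,
    vecMulVec_mulVec, hd]
  refine Finset.sum_congr rfl fun i _ => ?_
  rw [dotProduct_comm (z i) v]
  simp [sq]

lemma grad_ineq {q : ℕ} {f : Matrix (Fin q) (Fin q) ℝ → ℝ} (hf : ConvexOn ℝ Set.univ f)
    {L : Matrix (Fin q) (Fin q) ℝ →L[ℝ] ℝ} {A : Matrix (Fin q) (Fin q) ℝ}
    (h : HasFDerivAt f L A) (B : Matrix (Fin q) (Fin q) ℝ) : f A + L (B - A) ≤ f B := by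
  have hd := h.hasLineDerivAt (B - A)
  have hc : ConvexOn ℝ Set.univ (fun t : ℝ => f (A + t • (B - A))) := by
    have := hf.comp_affineMap (AffineMap.lineMap A B : ℝ →ᵃ[ℝ] _)
    refine this.congr ?_
    intro t _
    simp [AffineMap.lineMap_apply, add_comm]
  have := hc.le_slope_of_hasDerivAt (x := 0) (y := 1) trivial trivial one_pos hd
  simp only [slope_def_field, one_smul, zero_smul, add_zero, sub_zero, div_one,
    add_sub_cancel] at this
  exact le_sub_iff_add_le'.mp this

lemma quad_cont {q : ℕ} (M : Matrix (Fin q) (Fin q) ℝ) :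
    Continuous fun v : Fin q → ℝ => v ⬝ᵥ M *ᵥ v := by
  fun_prop

/-- Directional subsequence statement for the smallest eigenvalue. -/
lemma lambdaMin_seq {q : ℕ} {A B : Matrix (Fin q) (Fin q) ℝ} (hA : A.IsHermitian)
    (hB : B.IsHermitian) {vs : Fin q → ℝ} (hvs : vs ⬝ᵥ vs = 1)
    (heig : A *ᵥ vs = lambdaMin A • vs)
    (hspan : ∀ v : Fin q → ℝ, A *ᵥ v = lambdaMin A • v → ∃ c : ℝ, v = c • vs) :
    ∃ (t : ℕ → ℝ) (b : ℕ → ℝ), (∀ n, 0 < t n ∧ t n ≤ 1) ∧ Tendsto t atTop (𝓝 0) ∧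
      Tendsto b atTop (𝓝 (vs ⬝ᵥ B *ᵥ vs)) ∧
      ∀ n, lambdaMin A + t n * b n ≤ lambdaMin (A + t n • B) := by
  have hj : Nonempty (Fin q) := by
    by_contra hne
    rw [not_nonempty_iff] at hne
    simp [dotProduct] at hvs
  obtain ⟨j⟩ := hj
  have hH : ∀ t : ℝ, (A + t • B).IsHermitian := fun t => by
    refine hA.add ?_
    rw [Matrix.IsHermitian, Matrix.conjTranspose_smul, hB.eq, star_trivial]
  choose u hu1 hu2 using fun t : ℝ => lambdaMin_exists (hH t) j
  have hval : ∀ t, lambdaMin (A + t • B) = u t ⬝ᵥ A *ᵥ u t + t * (u t ⬝ᵥ B *ᵥ u t) := by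
    intro t
    have h : u t ⬝ᵥ (A + t • B) *ᵥ u t = lambdaMin (A + t • B) := by
      rw [hu2 t, dotProduct_smul, hu1 t]; simp
    rw [← h, Matrix.add_mulVec, dotProduct_add, Matrix.smul_mulVec, dotProduct_smul, smul_eq_mul]
  have hcpt : IsCompact {v : Fin q → ℝ | v ⬝ᵥ v = 1} := by
    refine Metric.isCompact_of_isClosed_isBounded
      (isClosed_eq (by fun_prop) continuous_const) ?_
    refine (Metric.isBounded_closedBall (x := (0 : Fin q → ℝ)) (r := 1)).subset ?_
    intro v (hv : v ⬝ᵥ v = 1)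
    rw [mem_closedBall_zero_iff, pi_norm_le_iff_of_nonneg zero_le_one]
    intro i
    have : v i * v i ≤ v ⬝ᵥ v :=
      Finset.single_le_sum (f := fun i => v i * v i) (fun i _ => mul_self_nonneg _)
        (Finset.mem_univ i)
    rw [Real.norm_eq_abs, abs_le_one_iff_mul_self_le_one]
    linarith
  obtain ⟨u0, hu0, ψ, hψ, hlim⟩ := hcpt.tendsto_subseq
    (x := fun n : ℕ => u (1 / ((n : ℝ) + 1))) (fun n => hu1 _)
  have ht : Tendsto (fun n => 1 / ((ψ n : ℝ) + 1)) atTop (𝓝 0) :=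
    (tendsto_one_div_add_atTop_nhds_zero_nat (𝕜 := ℝ)).comp hψ.tendsto_atTop
  have hbl : ∀ M : Matrix (Fin q) (Fin q) ℝ,
      Tendsto (fun n => u (1 / ((ψ n : ℝ) + 1)) ⬝ᵥ M *ᵥ u (1 / ((ψ n : ℝ) + 1))) atTop
        (𝓝 (u0 ⬝ᵥ M *ᵥ u0)) := fun M => ((quad_cont M).tendsto u0).comp hlim
  have hle : u0 ⬝ᵥ A *ᵥ u0 ≤ lambdaMin A := by
    have hl : Tendsto (fun n => u (1 / ((ψ n : ℝ) + 1)) ⬝ᵥ A *ᵥ u (1 / ((ψ n : ℝ) + 1))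
        + (1 / ((ψ n : ℝ) + 1)) * (u (1 / ((ψ n : ℝ) + 1)) ⬝ᵥ B *ᵥ u (1 / ((ψ n : ℝ) + 1))))
        atTop (𝓝 (u0 ⬝ᵥ A *ᵥ u0 + 0 * (u0 ⬝ᵥ B *ᵥ u0))) := (hbl A).add (ht.mul (hbl B))
    have hr : Tendsto (fun n => lambdaMin A + (1 / ((ψ n : ℝ) + 1)) * (vs ⬝ᵥ B *ᵥ vs))
        atTop (𝓝 (lambdaMin A + 0 * (vs ⬝ᵥ B *ᵥ vs))) :=
      tendsto_const_nhds.add (ht.mul tendsto_const_nhds)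
    have := le_of_tendsto_of_tendsto' hl hr (fun n => by
      rw [← hval]
      refine (lambdaMin_le (hH _) hvs).trans (le_of_eq ?_)
      rw [Matrix.add_mulVec, dotProduct_add, Matrix.smul_mulVec, dotProduct_smul, smul_eq_mul,
        heig, dotProduct_smul, hvs, smul_eq_mul, mul_one])
    simpa using this
  obtain ⟨c, hc⟩ := hspan u0 (lambdaMin_eig hA hu0 hle)
  have hcc : c * c = 1 := by
    have h : u0 ⬝ᵥ u0 = 1 := hu0
    rw [hc, smul_dotProduct, dotProduct_smul, hvs] at h
    simpa using h
  refine ⟨fun n => 1 / ((ψ n : ℝ) + 1),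
    fun n => u (1 / ((ψ n : ℝ) + 1)) ⬝ᵥ B *ᵥ u (1 / ((ψ n : ℝ) + 1)),
    fun n => ⟨by positivity, ?_⟩, ht, ?_, fun n => ?_⟩
  · rw [div_le_one (by positivity)]
    have : (0 : ℝ) ≤ ψ n := by positivity
    linarith
  · have := hbl B
    rw [hc, Matrix.mulVec_smul, smul_dotProduct, dotProduct_smul, smul_eq_mul, smul_eq_mul,
      ← mul_assoc, hcc, one_mul] at this
    exact this
  · rw [hval]
    have := lambdaMin_le hA (hu1 (1 / ((ψ n : ℝ) + 1)))
    linarith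

/-- in the setting of Statement 12, if moreover the eigenspace of `I₁(w*)`
associated with `λ_min(I₁(w*))` is one-dimensional, spanned by the unit eigenvector `v*`, then
`w*` minimizes `Φ₁ + Σ_k η_k Φ_k` over the simplex iff
`(v*ᵀ z_{1,i})² − λ_min(I₁(w*)) + Σ_k η_k d_k(i, w*) ≤ 0` for all `i`. -/
theorem stmt13 {N q₁ m : ℕ} (hm : 1 ≤ m)
    (z₁ : Fin N → Fin q₁ → ℝ)
    (q : Fin m → ℕ)
    (z : ∀ k : Fin m, Fin N → Fin (q k) → ℝ)
    (φ : ∀ k : Fin m, Matrix (Fin (q k)) (Fin (q k)) ℝ → ℝ)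
    (hφconv : ∀ k, ConvexOn ℝ Set.univ (φ k))
    (ws : Fin N → ℝ) (hws : ws ∈ simplex N)
    (L : ∀ k : Fin m, Matrix (Fin (q k)) (Fin (q k)) ℝ →L[ℝ] ℝ)
    (hdiff : ∀ k, HasFDerivAt (φ k) (L k) (infoMat (z k) ws))
    (G : ∀ k : Fin m, Matrix (Fin (q k)) (Fin (q k)) ℝ)
    (hG : ∀ k, ∀ H : Matrix (Fin (q k)) (Fin (q k)) ℝ, L k H = Matrix.trace ((G k)ᵀ * H))
    (η : Fin m → ℝ) (hη : ∀ k, 0 ≤ η k)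
    (vs : Fin q₁ → ℝ) (hunit : ∑ j, vs j ^ 2 = 1)
    (heig : (infoMat z₁ ws).mulVec vs = lambdaMin (infoMat z₁ ws) • vs)
    (hspan : ∀ v : Fin q₁ → ℝ,
      (infoMat z₁ ws).mulVec v = lambdaMin (infoMat z₁ ws) • v → ∃ c : ℝ, v = c • vs) :
    (∀ w ∈ simplex N,
        -(lambdaMin (infoMat z₁ ws)) + (∑ k, η k * φ k (infoMat (z k) ws)) ≤
          -(lambdaMin (infoMat z₁ w)) + ∑ k, η k * φ k (infoMat (z k) w)) ↔
      ∀ i : Fin N,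
        (dotp vs (z₁ i)) ^ 2 - lambdaMin (infoMat z₁ ws) +
          (∑ k, η k * Matrix.trace ((G k)ᵀ *
            (infoMat (z k) ws - Matrix.vecMulVec (z k i) (z k i)))) ≤ 0 := by
  have hvs : vs ⬝ᵥ vs = 1 := by
    rw [← hunit]; exact Finset.sum_congr rfl fun i _ => (sq _).symm
  have hquad : vs ⬝ᵥ infoMat z₁ ws *ᵥ vs = lambdaMin (infoMat z₁ ws) := by
    rw [heig, dotProduct_smul, hvs, smul_eq_mul, mul_one]
  constructor
  · intro hmin i
    set d : Fin N → ℝ := _root_.stdBasis i - ws with hd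
    have hdM : ∀ {p : ℕ} (y : Fin N → Fin p → ℝ),
        infoMat y d = vecMulVec (y i) (y i) - infoMat y ws := fun y => by
      rw [hd, infoMat_sub, infoMat_std]
    obtain ⟨t, b, ht, ht0, hb, hlam⟩ := lambdaMin_seq (infoMat_herm z₁ ws) (infoMat_herm z₁ d)
      hvs heig hspan
    have ht0' : Tendsto t atTop (𝓝[>] 0) :=
      tendsto_nhdsWithin_iff.mpr ⟨ht0, Eventually.of_forall fun n => (ht n).1⟩
    have hw : ∀ n, ws + t n • d ∈ simplex N := by
      intro n
      refine ⟨?_, fun j => ?_⟩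
      · simp [hd, Finset.sum_add_distrib, ← Finset.mul_sum, Finset.sum_sub_distrib, hws.1,
          _root_.stdBasis]
      · have h1 := hws.2 j
        have h2 : 0 ≤ _root_.stdBasis i j := by unfold _root_.stdBasis; split_ifs <;> norm_num
        have : (ws + t n • d) j = (1 - t n) * ws j + t n * _root_.stdBasis i j := by
          simp [hd]; ring
        rw [this]
        exact add_nonneg (mul_nonneg (by linarith [(ht n).2]) h1) (mul_nonneg (ht n).1.le h2)
    have hlim : Tendsto (fun n => -b n + ∑ k, η k * ((t n)⁻¹ •
        (φ k (infoMat (z k) ws + t n • infoMat (z k) d) - φ k (infoMat (z k) ws)))) atTop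
        (𝓝 (-(vs ⬝ᵥ infoMat z₁ d *ᵥ vs) + ∑ k, η k * L k (infoMat (z k) d))) := by
      refine hb.neg.add (tendsto_finsetSum _ fun k _ => tendsto_const_nhds.mul ?_)
      exact ((hdiff k).hasLineDerivAt (infoMat (z k) d)).tendsto_slope_zero_right.comp ht0'
    have hge := ge_of_tendsto' hlim (b := 0) (fun n => by
      have h1 := hmin _ (hw n)
      simp only [infoMat_add_smul] at h1
      have h2 := hlam n
      have htn := (ht n).1
      have h3 : 0 ≤ -(t n * b n) + ∑ k, η k *
        (φ k (infoMat (z k) ws + t n • infoMat (z k) d) - φ k (infoMat (z k) ws)) := by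
        simp only [mul_sub, Finset.sum_sub_distrib]
        linarith
      have h4 := mul_nonneg (inv_nonneg.mpr htn.le) h3
      refine h4.trans (le_of_eq ?_)
      rw [mul_add, Finset.mul_sum]
      congr 1
      · field_simp
      · refine Finset.sum_congr rfl fun k _ => ?_
        rw [smul_eq_mul]; ring)
    have e1 : vs ⬝ᵥ infoMat z₁ d *ᵥ vs = dotp vs (z₁ i) ^ 2 - lambdaMin (infoMat z₁ ws) := by
      rw [hd, infoMat_sub, Matrix.sub_mulVec, dotProduct_sub, hquad, infoMat_quad]
      simp [_root_.stdBasis]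
    have e2 : ∑ k, η k * L k (infoMat (z k) d) = -∑ k, η k * Matrix.trace ((G k)ᵀ *
            (infoMat (z k) ws - Matrix.vecMulVec (z k i) (z k i))) := by
      rw [← Finset.sum_neg_distrib]
      refine Finset.sum_congr rfl fun k _ => ?_
      rw [hdM, ← hG, ← neg_sub (infoMat (z k) ws), map_neg, mul_neg]
    rw [e1, e2] at hge
    linarith
  · intro h w hw
    have h1 : lambdaMin (infoMat z₁ w) ≤ ∑ i, w i * dotp vs (z₁ i) ^ 2 := by
      rw [← infoMat_quad]; exact lambdaMin_le (infoMat_herm _ _) hvs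
    have h2 : ∑ k, η k * (φ k (infoMat (z k) ws) + L k (infoMat (z k) w - infoMat (z k) ws))
        ≤ ∑ k, η k * φ k (infoMat (z k) w) :=
      Finset.sum_le_sum fun k _ => mul_le_mul_of_nonneg_left
        (grad_ineq (hφconv k) (hdiff k) _) (hη k)
    have h3 : ∑ i, w i * (dotp vs (z₁ i) ^ 2 - lambdaMin (infoMat z₁ ws) +
          (∑ k, η k * L k (infoMat (z k) ws - Matrix.vecMulVec (z k i) (z k i)))) ≤ 0 := by
      refine Finset.sum_nonpos fun i _ => mul_nonpos_of_nonneg_of_nonpos (hw.2 i) ?_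
      simpa only [hG] using h i
    have h4 : ∀ k, ∑ i, w i * L k (infoMat (z k) ws - Matrix.vecMulVec (z k i) (z k i))
        = -L k (infoMat (z k) w - infoMat (z k) ws) := by
      intro k
      simp only [map_sub, mul_sub, Finset.sum_sub_distrib, ← Finset.sum_mul, hw.1, one_mul]
      have : L k (infoMat (z k) w) = ∑ i, w i * L k (vecMulVec (z k i) (z k i)) := by
        conv_lhs => unfold infoMat
        simp [map_sum]
      rw [this]; ring
    have h5 : ∑ i, w i * (∑ k, η k * L k (infoMat (z k) ws - Matrix.vecMulVec (z k i) (z k i)))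
        = -∑ k, η k * L k (infoMat (z k) w - infoMat (z k) ws) := by
      simp only [Finset.mul_sum]
      rw [Finset.sum_comm, ← Finset.sum_neg_distrib]
      refine Finset.sum_congr rfl fun k _ => ?_
      rw [← mul_neg, ← h4, Finset.mul_sum]
      exact Finset.sum_congr rfl fun i _ => by ring
    simp only [mul_add, mul_sub, Finset.sum_add_distrib, Finset.sum_sub_distrib,
      ← Finset.sum_mul, hw.1, one_mul] at h3
    simp only [mul_add, Finset.sum_add_distrib] at h2
    have h6 := h5
    linarith
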